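/- With U_k as in the Chebyshev-type recurrence U_0 = B, U_1 = 2cos(X)B, U_k = 2cos(kX)B + U_{k-2}, one has sinc(X)·U_{k-1} = k·sinc(kX)·B for all k ≥ 1, where sinc X = Σ_{j≥0} (-1)^j X^{2j}/(2j+1)!. -/

import Mathlib

/-- Matrix cosine, defined by its power series. -/
noncomputable def mcos {ι : Type} [Fintype ι] [DecidableEq ι]
    (X : Matrix ι ι ℂ) : Matrix ι ι ℂ :=
  ∑' k : ℕ, (((-1 : ℂ) ^ k / (Nat.factorial (2 * k)) : ℂ)) • X ^ (2 * k)

/-- Matrix sine, defined by its power series. -/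
noncomputable def msin {ι : Type} [Fintype ι] [DecidableEq ι]
    (X : Matrix ι ι ℂ) : Matrix ι ι ℂ :=
  ∑' k : ℕ, (((-1 : ℂ) ^ k / (Nat.factorial (2 * k + 1)) : ℂ)) • X ^ (2 * k + 1)

/-- Matrix sinc, defined by its power series. -/
noncomputable def msinc {ι : Type} [Fintype ι] [DecidableEq ι]
    (X : Matrix ι ι ℂ) : Matrix ι ι ℂ :=
  ∑' k : ℕ, (((-1 : ℂ) ^ k / (Nat.factorial (2 * k + 1)) : ℂ)) • X ^ (2 * k)

/-- Matrix hyperbolic cosine, defined by its power series. -/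
noncomputable def mcosh {ι : Type} [Fintype ι] [DecidableEq ι]
    (X : Matrix ι ι ℂ) : Matrix ι ι ℂ :=
  ∑' k : ℕ, ((1 / (Nat.factorial (2 * k)) : ℂ)) • X ^ (2 * k)

/-- Matrix hyperbolic sine, defined by its power series. -/
noncomputable def msinh {ι : Type} [Fintype ι] [DecidableEq ι]
    (X : Matrix ι ι ℂ) : Matrix ι ι ℂ :=
  ∑' k : ℕ, ((1 / (Nat.factorial (2 * k + 1)) : ℂ)) • X ^ (2 * k + 1)

/-- Matrix hyperbolic sinc, defined by its power series. -/
noncomputable def msinch {ι : Type} [Fintype ι] [DecidableEq ι]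
    (X : Matrix ι ι ℂ) : Matrix ι ι ℂ :=
  ∑' k : ℕ, ((1 / (Nat.factorial (2 * k + 1)) : ℂ)) • X ^ (2 * k)

/-- Matrix exponential, defined by its power series. -/
noncomputable def mexp {ι : Type} [Fintype ι] [DecidableEq ι]
    (X : Matrix ι ι ℂ) : Matrix ι ι ℂ :=
  ∑' k : ℕ, ((1 / (Nat.factorial k) : ℂ)) • X ^ k

/-- `cos(t√A)` expressed as a power series in `A` (independent of the square root). -/
noncomputable def cosOfSq {ι : Type} [Fintype ι] [DecidableEq ι]
    (A : Matrix ι ι ℂ) (t : ℂ) : Matrix ι ι ℂ :=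
  ∑' k : ℕ, (((-1 : ℂ) ^ k * t ^ (2 * k) / (Nat.factorial (2 * k)) : ℂ)) • A ^ k

/-- `sinc(t√A)` expressed as a power series in `A` (independent of the square root). -/
noncomputable def sincOfSq {ι : Type} [Fintype ι] [DecidableEq ι]
    (A : Matrix ι ι ℂ) (t : ℂ) : Matrix ι ι ℂ :=
  ∑' k : ℕ, (((-1 : ℂ) ^ k * t ^ (2 * k) / (Nat.factorial (2 * k + 1)) : ℂ)) • A ^ k

theorem sc_sum {A : Type*} [NormedRing A] [NormedAlgebra ℂ A] (X : A) (c : ℕ → ℂ)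
    (hc : ∀ k, ‖c k‖ ≤ 1 / (Nat.factorial (2 * k) : ℝ)) :
    Summable (fun k : ℕ => ‖c k • X ^ (2 * k)‖) := by
  have h1 : Summable (fun k : ℕ => ‖X‖ ^ k / (Nat.factorial k : ℝ)) :=
    Real.summable_pow_div_factorial _
  have h2 := h1.comp_injective (i := fun k : ℕ => 2 * k) (fun a b h => by simpa using h)
  rw [← summable_nat_add_iff 1] at h2 ⊢
  refine Summable.of_nonneg_of_le (fun _ => norm_nonneg _) (fun k => ?_) h2
  simp only [Function.comp]
  rw [norm_smul, div_eq_mul_one_div, mul_comm]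
  exact mul_le_mul (norm_pow_le' _ (by omega)) (hc _) (norm_nonneg _) (by positivity)

theorem sum_even_odd (f : ℕ → ℂ) (m : ℕ) : ∑ p ∈ Finset.range (2 * m), f p
    = ∑ j ∈ Finset.range m, (f (2 * j) + f (2 * j + 1)) := by
  induction m with
  | zero => simp
  | succ m ih =>
    rw [Finset.sum_range_succ, ← ih, show 2 * (m + 1) = 2 * m + 1 + 1 by ring,
      Finset.sum_range_succ, Finset.sum_range_succ]
    ring

theorem binom_id (t : ℂ) (m : ℕ) :
    (t + 1) ^ (2 * m + 1) - (t - 1) ^ (2 * m + 1) =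
      2 * ∑ j ∈ Finset.range (m + 1), t ^ (2 * j) * ((2 * m + 1).choose (2 * j) : ℂ) := by
  have e : (t - 1) ^ (2 * m + 1) = - (-t + 1) ^ (2 * m + 1) := by
    rw [← Odd.neg_pow ⟨m, rfl⟩]; ring
  rw [e, add_pow, add_pow, sub_neg_eq_add, show 2 * m + 1 + 1 = 2 * (m + 1) by ring,
    sum_even_odd, sum_even_odd, ← Finset.sum_add_distrib, Finset.mul_sum]
  refine Finset.sum_congr rfl fun j _ => ?_
  simp only [one_pow, pow_succ, pow_mul, neg_sq]
  ring

theorem coeff_id (t : ℂ) (m : ℕ) :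
    2 * ∑ j ∈ Finset.range (m + 1), ((-1 : ℂ) ^ j / (Nat.factorial (2 * j)) * t ^ (2 * j)) *
      ((-1 : ℂ) ^ (m - j) / (Nat.factorial (2 * (m - j) + 1))) =
    (-1 : ℂ) ^ m / (Nat.factorial (2 * m + 1)) *
      ((t + 1) ^ (2 * m + 1) - (t - 1) ^ (2 * m + 1)) := by
  rw [binom_id, mul_left_comm, Finset.mul_sum (a := (-1 : ℂ) ^ m / _)]
  congr 1
  refine Finset.sum_congr rfl fun j hj => ?_
  have hj : j ≤ m := by simpa [Nat.lt_succ_iff] using hj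
  obtain ⟨i, rfl⟩ := Nat.exists_eq_add_of_le hj
  rw [Nat.cast_choose ℂ (by omega), show 2 * (j + i) + 1 - 2 * j = 2 * i + 1 by omega,
    show j + i - j = i by omega]
  have := Nat.factorial_ne_zero (2 * (j + i) + 1)
  have := Nat.factorial_ne_zero (2 * i + 1)
  have := Nat.factorial_ne_zero (2 * j)
  field_simp
  ring

theorem key_gen {A : Type*} [NormedRing A] [NormedAlgebra ℂ A] [CompleteSpace A] (X : A) (t : ℂ) :
    (2 : ℂ) • ((∑' k : ℕ, (((-1 : ℂ) ^ k / (Nat.factorial (2 * k + 1)) : ℂ)) • X ^ (2 * k)) *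
      (∑' k : ℕ, (((-1 : ℂ) ^ k / (Nat.factorial (2 * k)) : ℂ)) • (t • X) ^ (2 * k))) =
    (t + 1) • (∑' k : ℕ, (((-1 : ℂ) ^ k / (Nat.factorial (2 * k + 1)) : ℂ)) •
        ((t + 1) • X) ^ (2 * k)) -
    (t - 1) • (∑' k : ℕ, (((-1 : ℂ) ^ k / (Nat.factorial (2 * k + 1)) : ℂ)) •
        ((t - 1) • X) ^ (2 * k)) := by
  have hs : ∀ Y : A, Summable (fun k : ℕ =>
      ‖(((-1 : ℂ) ^ k / (Nat.factorial (2 * k + 1)) : ℂ)) • Y ^ (2 * k)‖) := fun Y =>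
    sc_sum Y _ fun k => by
      simp only [norm_div, norm_pow, norm_neg, norm_one, one_pow, Complex.norm_natCast]
      have : Nat.factorial (2 * k) ≤ Nat.factorial (2 * k + 1) := Nat.factorial_le (by omega)
      gcongr
  have hco : ∀ Y : A, Summable (fun k : ℕ =>
      ‖(((-1 : ℂ) ^ k / (Nat.factorial (2 * k)) : ℂ)) • Y ^ (2 * k)‖) := fun Y =>
    sc_sum Y _ fun k => by
      simp
  rw [tsum_mul_tsum_eq_tsum_sum_range_of_summable_norm (hs X) (hco (t • X)),
    ← (hs _).of_norm.tsum_const_smul, ← (hs _).of_norm.tsum_const_smul,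
    ← Summable.tsum_sub ((hs _).of_norm.const_smul _) ((hs _).of_norm.const_smul _),
    ← Summable.tsum_const_smul _
      (summable_norm_sum_mul_range_of_summable_norm (hs X) (hco (t • X))).of_norm]
  refine tsum_congr fun m => ?_
  have h : ∑ k ∈ Finset.range (m + 1),
      ((-1 : ℂ) ^ k / (Nat.factorial (2 * k + 1)) : ℂ) • X ^ (2 * k) *
      ((-1 : ℂ) ^ (m - k) / (Nat.factorial (2 * (m - k))) : ℂ) • (t • X) ^ (2 * (m - k)) =
      (∑ j ∈ Finset.range (m + 1), ((-1 : ℂ) ^ j / (Nat.factorial (2 * j)) * t ^ (2 * j)) *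
      ((-1 : ℂ) ^ (m - j) / (Nat.factorial (2 * (m - j) + 1)))) • X ^ (2 * m) := by
    rw [Finset.sum_smul, ← Finset.sum_range_reflect]
    refine Finset.sum_congr rfl fun j hj => ?_
    have hj : j ≤ m := by simpa [Nat.lt_succ_iff] using hj
    rw [show m + 1 - 1 - j = m - j by omega, show m - (m - j) = j by omega, smul_pow, smul_smul,
      smul_mul_smul_comm, ← pow_add, show 2 * (m - j) + 2 * j = 2 * m by omega]
    congr 1
    ring
  rw [h, smul_smul, coeff_id]
  simp only [smul_pow, smul_smul, ← sub_smul]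
  congr 1
  ring

attribute [local instance] Matrix.linftyOpNormedRing Matrix.linftyOpNormedAlgebra in
theorem key_mat {n : ℕ} (X : Matrix (Fin n) (Fin n) ℂ) (t : ℂ) :
    (2 : ℂ) • (msinc X * mcos (t • X)) =
      (t + 1) • msinc ((t + 1) • X) - (t - 1) • msinc ((t - 1) • X) :=
  key_gen X t

theorem stmt3 {n n₀ : ℕ} (X : Matrix (Fin n) (Fin n) ℂ) (B : Matrix (Fin n) (Fin n₀) ℂ)
    (U : ℕ → Matrix (Fin n) (Fin n₀) ℂ)
    (hU0 : U 0 = B) (hU1 : U 1 = 2 • (mcos X * B))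
    (hU : ∀ k, 2 ≤ k → U k = 2 • (mcos ((k : ℂ) • X) * B) + U (k - 2)) :
    ∀ k, 1 ≤ k → msinc X * U (k - 1) = (k : ℂ) • (msinc ((k : ℂ) • X) * B) := by
  have hk : ∀ t : ℂ, msinc X * 2 • (mcos (t • X) * B) =
      (t + 1) • (msinc ((t + 1) • X) * B) - (t - 1) • (msinc ((t - 1) • X) * B) := fun t => by
    have := congrArg (· * B) (key_mat X t)
    simp only [Matrix.sub_mul, Matrix.smul_mul] at this
    rw [← this, Matrix.mul_smul, ← Matrix.mul_assoc, two_smul, two_smul]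
  intro k
  induction k using Nat.strong_induction_on with
  | _ k ih =>
    intro h1
    match k, h1, ih with
    | 1, _, _ => simp [hU0]
    | 2, _, _ =>
      have := hk 1
      simp only [one_smul, sub_self, zero_smul, sub_zero] at this
      simp only [Nat.add_one_sub_one, hU1, this]
      norm_num
    | k + 3, _, ih =>
      have h := ih (k + 1) (by omega) (by omega)
      have h2 := hk ((k + 2 : ℕ) : ℂ)
      rw [show k + 3 - 1 = k + 2 by omega, hU (k + 2) (by omega), Matrix.mul_add, h2,
        show k + 2 - 2 = k + 1 - 1 by omega, h,
        show ((k + 2 : ℕ) : ℂ) + 1 = ((k + 3 : ℕ) : ℂ) by push_cast; ring,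
        show ((k + 2 : ℕ) : ℂ) - 1 = ((k + 1 : ℕ) : ℂ) by push_cast; ring, sub_add_cancel]
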